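/- Let n ≥ k and 1 ≤ r ≤ d_{n+1}, and consider words w of length r·|s_n| such that w·w is a factor of 𝐬. Then: (a) if 2r < d_{n+1} + 2, the set of such words is exactly { C_j(s_n^r) : 0 ≤ j ≤ |s_n| - 1 }, and it has exactly |s_n| elements; (b) if 2r = d_{n+1} + 2, the set of such words is exactly { C_j(s_n^r) : 0 ≤ j ≤ |D_{n-k}| }, and it has exactly |D_{n-k}| + 1 elements; (c) if 2r > d_{n+1} + 2, there is no such word. -/

import Mathlib

/-!
Let `μ_n(b)` be the image of a letter `b` under the first `n` groups of the substitutions that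
generate `𝐬`, so that `s_n = μ_n(a_{n+1})`, and let `Pal_n = s_{n-1}^{d_n} ⋯ s_0^{d_1}`. Put
`x = a_{n+1}`, `q = |s_n|` and `d = d_{n+1}`. The word `𝐬` is a concatenation of blocks `μ_n(b)` in
which the blocks with `b ≠ x` are separated by runs of `d` or `d + 1` copies of `s_n` (`good_lift`).
Two facts locate the letter `b` relative to a block `μ_n(b)`: the block ends with `b` (`B_last`), and
the letter at distance `|Pal_n|` from its start is `b` as well, the word `Pal_n` being read before it
(`Pal_prefix_cons`).

Let `|w| = rq` with `r ≤ d` and let `y ≠ x`. Shifting the last letter of a block `μ_n(y)` by `rq` to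
the right leads to the last letter of an `s_n`, which is `x ≠ y`; shifting the letter at distance
`|Pal_n|` from its start by `rq` to the left leads to an `x` too. A square `ww` contains neither
mismatched pair, and this forces it into a single run `s_n^{d+1} Pal_n` (`square_in_run`).
Conversely this run occurs in `𝐬` (`run_occurs`). Since `Pal_n = s_n D_{n-k}` (`Pal_eq`) and
`|D_{n-k}| < q` (by `Pal_length_lt`), the run has period `q` and length `(d+2)q + |D_{n-k}|`. The
squares are its windows of length `2rq`; the starting positions are `0, …, (d+2-2r)q + |D_{n-k}|`,
and only their residues modulo `q` matter. The three cases of the theorem compare `2r` with `d + 2`.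

The conjugates of `s_n` are pairwise distinct because the incidence matrix of `μ_n` is unimodular:
some integer weights of the letters give `s_n` total weight `1` (`exists_weight`), which excludes a
period of `s_n^ω` smaller than `q` (`win_inj`).
-/

namespace Epi

variable {α : Type*}

/-- `pw w p` is the `p`-fold concatenation `w^p`. -/
def pw (w : List α) : ℕ → List α
  | 0 => []
  | p + 1 => w ++ pw w p

/-- `S k a d m` is the word `s_{m-(k-1)}` of the paper (shifted indexing: `m : ℕ`
ranges over the indices `n ≥ 1-k`). -/
def S (k : ℕ) (a : ℕ → α) (d : ℕ → ℕ) : ℕ → List α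
  | m =>
    if h : m < max k 1 then [a ((m + 1) % k + 1)]
    else
      ((List.range (k - 1)).map
          (fun j => pw (S k a d (m - 1 - j)) (d (m + 1 - k - j)))).flatten ++
        S k a d (m - max k 1)
  termination_by m => m
  decreasing_by all_goals omega

/-- `s k a d n` is the word `s_n`, for `n ≥ 0`. -/
def s (k : ℕ) (a : ℕ → α) (d : ℕ → ℕ) (n : ℕ) : List α :=
  S k a d (n + (k - 1))

/-- `D k a d n` is the word `D_n = s_n^{d_{n+1}-1} s_{n-1}^{d_n} ⋯ s_1^{d_2} s_0^{d_1}`. -/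
def D (k : ℕ) (a : ℕ → α) (d : ℕ → ℕ) (n : ℕ) : List α :=
  pw (s k a d n) (d (n + 1) - 1) ++
    ((List.range n).map (fun j => pw (s k a d (n - 1 - j)) (d (n - j)))).flatten

/-- `G k a d n r` is the word `G_{n,r}`: `s_n` with its prefix of length `|D_{n-r}|` removed. -/
def G (k : ℕ) (a : ℕ → α) (d : ℕ → ℕ) (n r : ℕ) : List α :=
  (s k a d n).drop (D k a d (n - r)).length

/-- `Om k a d n r` is the set `Ω_n^r` of singular `n`-words of the `r`-th kind. -/
def Om (k : ℕ) (a : ℕ → α) (d : ℕ → ℕ) (n r : ℕ) : Set (List α) :=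
  { w | w.length = (s k a d n).length ∧
      w <:+:
        ((((G k a d n r).reverse ++ D k a d (n - r) ++ G k a d n r).drop 1).dropLast) }

/-- `w` is a factor of the infinite word `𝐬`. -/
def FactorS (k : ℕ) (a : ℕ → α) (d : ℕ → ℕ) (w : List α) : Prop :=
  ∃ N, w <:+: s k a d N

/-! ### Blocks, their last letters, and the words `Pal_n` -/

/-- The block `μ_n(b)`, where `μ_n = L_{ℓ 0}^{d 1} ∘ ⋯ ∘ L_{ℓ (n-1)}^{d n}` and `L_c` is the
morphism with `c ↦ c` and `b ↦ cb` for `b ≠ c`. The letter `ℓ n`, in code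
`l n`, stands for `a_{n+1}` with indices of `a` read modulo `k`, and then `s_n = μ_n(ℓ n)`. -/
noncomputable def B (l : ℕ → α) (d : ℕ → ℕ) : ℕ → α → List α
  | 0, b => [b]
  | n + 1, b => open Classical in
      if b = l n then B l d n b else pw (B l d n (l n)) (d (n + 1)) ++ B l d n b

/-- The word `s_{n-1}^{d_n} ⋯ s_0^{d_1}`, a palindromic prefix of `𝐬`. -/
noncomputable def Pal (l : ℕ → α) (d : ℕ → ℕ) : ℕ → List α
  | 0 => []
  | n + 1 => pw (B l d n (l n)) (d (n + 1)) ++ Pal l d n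

/-- The image `L_{ℓ n}^{d (n+1)}(b)` of a letter. -/
noncomputable def lift1 (l : ℕ → α) (d : ℕ → ℕ) (n : ℕ) (b : α) : List α := open Classical in
  if b = l n then [b] else List.replicate (d (n + 1)) (l n) ++ [b]

theorem pw_length (w : List α) (p : ℕ) : (pw w p).length = p * w.length := by
  induction p with
  | zero => simp [pw]
  | succ p ih => simp [pw, ih]; ring

theorem pw_add (w : List α) (p q : ℕ) : pw w (p + q) = pw w p ++ pw w q := by
  induction p with
  | zero => simp [pw]
  | succ p ih => rw [Nat.add_right_comm]; simp [pw, ih]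

theorem flatMap_replicate (f : α → List α) (m : ℕ) (x : α) :
    (List.replicate m x).flatMap f = pw (f x) m := by
  induction m with
  | zero => simp [pw]
  | succ p ih => simp [List.replicate_succ, pw, ih]

theorem B_self (l : ℕ → α) (d : ℕ → ℕ) (n : ℕ) : B l d (n + 1) (l n) = B l d n (l n) := by
  simp [B]

theorem B_ne (l : ℕ → α) (d : ℕ → ℕ) (n : ℕ) {b : α} (h : b ≠ l n) :
    B l d (n + 1) b = pw (B l d n (l n)) (d (n + 1)) ++ B l d n b := by
  simp [B, h]

theorem B_suffix (l : ℕ → α) (d : ℕ → ℕ) (n i : ℕ) (b : α) : B l d n b <:+ B l d (n + i) b := by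
  induction i with
  | zero => simp
  | succ i ih =>
    refine ih.trans ?_
    rw [← Nat.add_assoc]
    by_cases h : b = l (n + i)
    · rw [h, B_self]
    · rw [B_ne l d _ h]; exact List.suffix_append _ _

/-- The last letter of `μ_n(b)` is `b`. -/
theorem B_last (l : ℕ → α) (d : ℕ → ℕ) (n : ℕ) (b : α) : ∃ u, B l d n b = u ++ [b] := by
  obtain ⟨u, hu⟩ := B_suffix l d 0 n b
  exact ⟨u, by simpa [B] using hu.symm⟩

theorem B_length_pos (l : ℕ → α) (d : ℕ → ℕ) (n : ℕ) (b : α) : 0 < (B l d n b).length := by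
  obtain ⟨u, hu⟩ := B_last l d n b
  simp [hu]

theorem B_lift (l : ℕ → α) (d : ℕ → ℕ) (n : ℕ) (b : α) :
    B l d (n + 1) b = (lift1 l d n b).flatMap (B l d n) := by
  by_cases h : b = l n
  · simp [lift1, h, B_self]
  · rw [B_ne l d n h]; simp [lift1, h, flatMap_replicate]

theorem flatMap_lift (l : ℕ → α) (d : ℕ → ℕ) (n : ℕ) (T : List α) :
    T.flatMap (B l d (n + 1)) = (T.flatMap (lift1 l d n)).flatMap (B l d n) := by
  rw [List.flatMap_assoc]
  congr 1
  funext b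
  exact B_lift l d n b

theorem exists_desubst (l : ℕ → α) (d : ℕ → ℕ) (n i : ℕ) (b : α) :
    ∃ T : List α, B l d (n + i) b = T.flatMap (B l d n) := by
  induction i generalizing n with
  | zero => exact ⟨[b], by simp⟩
  | succ i ih =>
    obtain ⟨T, hT⟩ := ih (n + 1)
    refine ⟨T.flatMap (lift1 l d n), ?_⟩
    rw [← flatMap_lift, ← hT]
    congr 1
    omega

theorem Pal_succ (l : ℕ → α) (d : ℕ → ℕ) (n : ℕ) :
    Pal l d (n + 1) = (List.replicate (d (n + 1)) (l n)).flatMap (B l d n) ++ Pal l d n := by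
  rw [flatMap_replicate]; rfl

theorem replicate_prefix_lift (l : ℕ → α) (d : ℕ → ℕ) (n : ℕ) (T : List α) :
    List.replicate (d (n + 1)) (l n) <+:
      T.flatMap (lift1 l d n) ++ List.replicate (d (n + 1)) (l n) := by
  induction T with
  | nil => simp
  | cons b T ih =>
    by_cases h : b = l n
    · obtain ⟨t, ht⟩ := ih
      refine ⟨l n :: t, ?_⟩
      have : List.replicate (d (n + 1)) (l n) ++ l n :: t
          = l n :: (List.replicate (d (n + 1)) (l n) ++ t) := by
        rw [← List.cons_append, ← List.replicate_succ, List.replicate_succ']; simp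
      rw [this, ht]; simp [lift1, h]
    · simp [lift1, h, List.append_assoc]

theorem replicate_prefix_lift_cons (l : ℕ → α) (d : ℕ → ℕ) (n : ℕ) (b : α) (T : List α) :
    ∃ v, (b :: T).flatMap (lift1 l d n) ++ List.replicate (d (n + 1)) (l n) =
      List.replicate (d (n + 1)) (l n) ++ b :: v := by
  by_cases h : b = l n
  · obtain ⟨t, ht⟩ := replicate_prefix_lift l d n T
    refine ⟨t, ?_⟩
    have : List.replicate (d (n + 1)) (l n) ++ l n :: t
        = l n :: (List.replicate (d (n + 1)) (l n) ++ t) := by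
      rw [← List.cons_append, ← List.replicate_succ, List.replicate_succ']; simp
    rw [h, this, ht]; simp [lift1]
  · exact ⟨_, by simp [lift1, h]; rfl⟩

/-- The letter of `μ_n(b v) Pal_n` at position `|Pal_n|` is `b`, whatever `v` is. -/
theorem Pal_prefix_cons (l : ℕ → α) (d : ℕ → ℕ) (n : ℕ) (b : α) (v : List α) :
    Pal l d n ++ [b] <+: (b :: v).flatMap (B l d n) ++ Pal l d n := by
  induction n generalizing b v with
  | zero => simp [Pal, B]
  | succ n ih =>
    obtain ⟨t, ht⟩ := replicate_prefix_lift_cons l d n b v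
    rw [Pal_succ, flatMap_lift, ← List.append_assoc, ← List.flatMap_append, ht,
      List.flatMap_append, List.append_assoc, List.append_assoc]
    exact (List.prefix_append_right_inj _).2 (ih b t)

theorem Pal_isPrefix (l : ℕ → α) (d : ℕ → ℕ) (n : ℕ) (v : List α) :
    Pal l d n <+: v.flatMap (B l d n) ++ Pal l d n := by
  cases v with
  | nil => simp
  | cons b v => exact (List.prefix_append _ _).trans (Pal_prefix_cons l d n b v)

/-- The source of the bound `|D_{n-k}| < |s_n|`. -/
theorem Pal_length_lt (l : ℕ → α) (d : ℕ → ℕ) (n : ℕ) {b c : α} (h : b ≠ c) :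
    (Pal l d n).length + 2 ≤ (B l d n b).length + (B l d n c).length := by
  induction n generalizing b c with
  | zero => simp [Pal, B]
  | succ n ih =>
    have := ih h
    simp only [Pal, List.length_append, pw_length]
    by_cases hb : b = l n
    · have hc : c ≠ l n := fun hc => h (hb.trans hc.symm)
      rw [hb, B_self, B_ne l d n hc]
      rw [hb] at this
      simp only [List.length_append, pw_length]; omega
    · rw [B_ne l d n hb]
      simp only [List.length_append, pw_length]
      have := (B_suffix l d n 1 c).length_le
      omega

/-- Unimodularity of the incidence matrix of `μ_n`: letter weights can be chosen so that the
weights of the blocks `μ_n(b)` are prescribed. -/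
theorem exists_weight (l : ℕ → α) (d : ℕ → ℕ) (n : ℕ) (g : α → ℤ) :
    ∃ f : α → ℤ, ∀ b, ((B l d n b).map f).sum = g b := by
  classical
  induction n generalizing g with
  | zero => exact ⟨g, by simp [B]⟩
  | succ n ih =>
    obtain ⟨f, hf⟩ := ih (fun b => if b = l n then g b else g b - d (n + 1) * g (l n))
    have hp : ∀ (w : List α) p, ((pw w p).map f).sum = p * (w.map f).sum := by
      intro w p
      induction p with
      | zero => simp [pw]
      | succ p ih => simp [pw, ih]; ring
    refine ⟨f, fun b => ?_⟩
    by_cases h : b = l n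
    · rw [h, B_self, hf]; simp
    · rw [B_ne l d n h, List.map_append, List.sum_append, hp, hf, hf]; simp [h]

/-! ### Letter words at level `n` -/

/-- The letter words over which level `n` of `𝐬` is built: the letters other than `x`
are separated by runs of `x` of length `d` or `d + 1`, with such runs at both ends as well. -/
inductive Good (x : α) (d : ℕ) : List α → Prop
  | base (m : ℕ) : d ≤ m → m ≤ d + 1 → Good x d (List.replicate m x)
  | step (m : ℕ) (y : α) (v : List α) : d ≤ m → m ≤ d + 1 → y ≠ x → Good x d v →
      Good x d (List.replicate m x ++ y :: v)

theorem Good.isPrefix {x : α} {d : ℕ} {v : List α} (h : Good x d v) (r : ℕ) (hr : r ≤ d) :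
    ∃ v', v = List.replicate r x ++ v' := by
  cases h with
  | base m h1 h2 =>
    refine ⟨List.replicate (m - r) x, ?_⟩
    rw [← List.replicate_add]; congr 1; omega
  | step m y v h1 h2 =>
    refine ⟨List.replicate (m - r) x ++ y :: v, ?_⟩
    rw [← List.append_assoc, ← List.replicate_add]; congr 2; omega

theorem Good.pw_append {x y : α} {d : ℕ} {v : List α} (h : Good x d v) (hy : y ≠ x) (m : ℕ) :
    Good x d (pw (List.replicate d x ++ [y]) m ++ v) := by
  induction m with
  | zero => simpa [pw] using h
  | succ m ih =>
    have := Good.step d y _ le_rfl (Nat.le_succ d) hy ih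
    simpa [pw] using this

/-- Two successive desubstitutions leave letter words that, closed by a run of `d (n+1)` letters
`x = ℓ n`, are `Good` and have a first run of `x` of length exactly `d (n+1)`. The run
lengths exceed `d (n+1)` by at most one because `ℓ n` is isolated at level `n + 1`, being separated by letters `ℓ (n+1)`. -/
theorem good_lift (l : ℕ → α) (d : ℕ → ℕ) (n : ℕ) (hl : l (n + 1) ≠ l n) (hd : 1 ≤ d (n + 2))
    (T : List α) : ∃ v, (T.flatMap (lift1 l d (n + 1))).flatMap (lift1 l d n) ++
        List.replicate (d (n + 1)) (l n) = List.replicate (d (n + 1)) (l n) ++ v ∧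
      (v = [] ∨ ∃ y v', y ≠ l n ∧ Good (l n) (d (n + 1)) v' ∧ v = y :: v') := by
  induction T with
  | nil => exact ⟨[], by simp⟩
  | cons b T ih =>
    obtain ⟨v, hv, hv'⟩ := ih
    have g0 : Good (l n) (d (n + 1)) (List.replicate (d (n + 1)) (l n) ++ v) := by
      rcases hv' with rfl | ⟨y, v', hy, hg, rfl⟩
      · simpa using Good.base (x := l n) (d (n + 1)) le_rfl (Nat.le_succ _)
      · exact Good.step _ _ _ le_rfl (Nat.le_succ _) hy hg
    have g1 : Good (l n) (d (n + 1)) (l n :: (List.replicate (d (n + 1)) (l n) ++ v)) := by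
      rcases hv' with rfl | ⟨y, v', hy, hg, rfl⟩
      · simpa [List.replicate_succ] using
          Good.base (x := l n) (d (n + 1) + 1) (Nat.le_succ _) le_rfl
      · simpa [List.replicate_succ] using
          Good.step (d (n + 1) + 1) y v' (Nat.le_succ _) le_rfl hy hg
    have hx : lift1 l d n (l (n + 1)) = List.replicate (d (n + 1)) (l n) ++ [l (n + 1)] := by
      simp [lift1, hl]
    obtain ⟨e, he⟩ : ∃ e, d (n + 2) = e + 1 := ⟨d (n + 2) - 1, by omega⟩
    simp only [List.flatMap_cons, List.flatMap_append, List.append_assoc, hv]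
    by_cases h : b = l (n + 1)
    · subst h
      refine ⟨l (n + 1) :: (List.replicate (d (n + 1)) (l n) ++ v), ?_, Or.inr ⟨_, _, hl, g0, rfl⟩⟩
      have : lift1 l d (n + 1) (l (n + 1)) = [l (n + 1)] := by simp [lift1]
      simp [this, hx]
    · have h1 : (lift1 l d (n + 1) b).flatMap (lift1 l d n) =
          pw (List.replicate (d (n + 1)) (l n) ++ [l (n + 1)]) (e + 1) ++ lift1 l d n b := by
        simp [lift1, h, flatMap_replicate, he, hl]
      have g2 : Good (l n) (d (n + 1))
          (lift1 l d n b ++ (List.replicate (d (n + 1)) (l n) ++ v)) := by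
        by_cases hb : b = l n
        · simpa [lift1, hb] using g1
        · simpa [lift1, hb] using Good.step _ _ _ le_rfl (Nat.le_succ _) hb g0
      rw [h1]
      exact ⟨_, by simp only [pw, List.append_assoc]; rfl,
        Or.inr ⟨_, _, hl, g2.pw_append hl e, by simp⟩⟩

/-! ### Squares lie in a single run -/

theorem getElem?_of_isPrefix {u w : List α} {b : α} (h : u ++ [b] <+: w) : w[u.length]? = some b := by
  obtain ⟨t, rfl⟩ := h
  simp

theorem getElem?_append_add (u v : List α) (i : ℕ) : (u ++ v)[u.length + i]? = v[i]? := by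
  rw [List.getElem?_append_right (by omega), Nat.add_sub_cancel_left]

theorem B_length_le (l : ℕ → α) (d : ℕ → ℕ) (n : ℕ) (b : α) :
    (B l d n b).length ≤ (Pal l d n).length + 1 := by
  induction n with
  | zero => simp [B, Pal]
  | succ n ih =>
    by_cases h : b = l n
    · rw [h, B_self, ← h]; simp only [Pal, List.length_append]; omega
    · rw [B_ne l d n h]; simp only [Pal, List.length_append]; omega

/-- A square `ww` with `|w| = r|s_n|`, `r ≤ d_{n+1}`, lies inside `s_n^{d_{n+1}+1} Pal_n`.
For each block `μ_n(y)` with `y ≠ ℓ n`, the letter `ℓ n` stands at distance `|w|` to the right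
of its last letter `y`, and at distance `|w|` to the left of the letter `y` found at distance `|Pal_n|`
from its start. So the square lies to the right of the former or to the left of the latter. -/
theorem square_in_run (l : ℕ → α) (d : ℕ → ℕ) (n r : ℕ) (hr1 : 1 ≤ r) (hrd : r ≤ d (n + 1))
    {v : List α} (hg : Good (l n) (d (n + 1)) v) (w : List α)
    (hw : w.length = r * (B l d n (l n)).length) (P Q : List α)
    (hZ : v.flatMap (B l d n) ++ Pal l d n = P ++ (w ++ (w ++ Q))) :
    w ++ w <:+: pw (B l d n (l n)) (d (n + 1) + 1) ++ Pal l d n := by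
  have hsuf : ∀ m, m ≤ d (n + 1) + 1 → pw (B l d n (l n)) m ++ Pal l d n <:+
      pw (B l d n (l n)) (d (n + 1) + 1) ++ Pal l d n := by
    intro m hm
    refine ⟨pw (B l d n (l n)) (d (n + 1) + 1 - m), ?_⟩
    rw [← List.append_assoc, ← pw_add]; congr 2; omega
  induction hg generalizing P with
  | base m h1 h2 =>
    rw [flatMap_replicate] at hZ
    refine List.IsInfix.trans ⟨P, Q, ?_⟩ (hsuf m h2).isInfix
    rw [hZ]; simp
  | step m y v h1 h2 hy hg ih =>
    set s := B l d n (l n) with hs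
    set q := s.length with hq
    have hq0 : 0 < q := B_length_pos l d n (l n)
    obtain ⟨By, hBy⟩ := B_last l d n y
    set Z := v.flatMap (B l d n) ++ Pal l d n with hZd
    have hfull : (List.replicate m (l n) ++ y :: v).flatMap (B l d n) ++ Pal l d n
        = pw s m ++ ((y :: v).flatMap (B l d n) ++ Pal l d n) := by
      rw [List.flatMap_append, flatMap_replicate, List.append_assoc]
    rw [hfull] at hZ
    have hyv : (y :: v).flatMap (B l d n) ++ Pal l d n = By ++ y :: Z := by
      simp [hZd, hBy]
    set W := P ++ (w ++ (w ++ Q)) with hW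
    have hPalm : Pal l d n ++ [y] <+: By ++ y :: Z := by
      rw [← hyv]; exact Pal_prefix_cons l d n y v
    have hsm : (pw s m).length = m * q := pw_length _ _
    -- equality of letters at distance `|w|` inside the square
    have hper : ∀ i, P.length ≤ i → i < P.length + w.length → W[i]? = W[i + w.length]? := by
      intro i hi1 hi2
      obtain ⟨t, rfl⟩ := Nat.exists_eq_add_of_le hi1
      have ht : t < w.length := by omega
      rw [hW, Nat.add_assoc, Nat.add_comm t, getElem?_append_add, getElem?_append_add,
        getElem?_append_add, List.getElem?_append_left ht, List.getElem?_append_left ht]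
    have hwpos : 0 < w.length := by rw [hw]; exact Nat.mul_pos hr1 hq0
    -- the last letter of `μ_n(y)` against the letter `|w|` further
    have he1 : W[m * q + By.length]? = some y := by
      rw [← hZ, hyv, List.getElem?_append_right (by omega), hsm]; simp
    have he2 : W[m * q + By.length + w.length]? = some (l n) := by
      obtain ⟨v', hv'⟩ := hg.isPrefix r hrd
      obtain ⟨r', rfl⟩ : ∃ r', r = r' + 1 := ⟨r - 1, by omega⟩
      obtain ⟨u, hu⟩ := B_last l d n (l n)
      have hqu : q = u.length + 1 := by rw [hq, hs, hu]; simp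
      have hZ1 : Z = pw s r' ++ (u ++ (l n :: (v'.flatMap (B l d n) ++ Pal l d n))) := by
        rw [hZd, hv', List.flatMap_append, flatMap_replicate, pw_add]
        simp only [pw, List.append_assoc, List.append_nil, ← hs]
        rw [hs, hu]; simp
      have hlen : w.length = r' * q + u.length + 1 := by rw [hw, Nat.succ_mul, hqu]; ring
      have hlen' : m * q + By.length + w.length
          = (pw s m).length + (By.length + (((pw s r').length + (u.length + 0)) + 1)) := by
        rw [hsm, pw_length, hlen]; ring
      rw [← hZ, hyv, hlen', getElem?_append_add, getElem?_append_add, List.getElem?_cons_succ, hZ1,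
        getElem?_append_add, getElem?_append_add]
      simp
    -- the first letter leaving the run against the letter `|w|` before
    have hf1 : W[m * q + (Pal l d n).length]? = some y := by
      rw [← hZ, hyv, List.getElem?_append_right (by omega), hsm, Nat.add_sub_cancel_left]
      exact getElem?_of_isPrefix hPalm
    have hrm : r * q ≤ m * q := Nat.mul_le_mul_right q (by omega)
    have hf2 : W[m * q + (Pal l d n).length - w.length]? = some (l n) := by
      obtain ⟨r', rfl⟩ : ∃ r', r = r' + 1 := ⟨r - 1, by omega⟩
      have h3 : W = pw s (m - (r' + 1)) ++ ((l n :: (List.replicate r' (l n) ++ y :: v)).flatMap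
          (B l d n) ++ Pal l d n) := by
        rw [← hZ, List.flatMap_cons (x := l n), List.flatMap_append, flatMap_replicate, ← hs]
        have : m = (m - (r' + 1)) + (r' + 1) := by omega
        conv_lhs => rw [this, pw_add]
        simp [pw]
      have h4 : (pw s (m - (r' + 1))).length = m * q - w.length := by
        rw [pw_length, hw, Nat.sub_mul]
      rw [h3, List.getElem?_append_right (by omega), h4]
      have : m * q + (Pal l d n).length - w.length - (m * q - w.length) = (Pal l d n).length := by
        omega
      rw [this]
      exact getElem?_of_isPrefix (Pal_prefix_cons l d n _ _)
    have hle : By.length ≤ (Pal l d n).length := by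
      have := B_length_le l d n y
      rw [hBy] at this
      simpa using this
    by_cases c1 : m * q + By.length < P.length
    · rw [hyv] at hZ
      have hZ' : (pw s m ++ By ++ [y]) ++ Z = P ++ (w ++ (w ++ Q)) := by rw [← hW, ← hZ]; simp
      obtain ⟨P', hP'⟩ : pw s m ++ By ++ [y] <+: P :=
        List.prefix_of_prefix_length_le ⟨Z, hZ'⟩ ⟨_, rfl⟩ (by simp [hsm]; omega)
      rw [← hP', List.append_assoc _ P'] at hZ'
      exact ih P' (List.append_cancel_left hZ')
    by_cases c2 : m * q + By.length < P.length + w.length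
    · have := hper _ (not_lt.1 c1) c2
      rw [he1, he2] at this
      exact absurd (Option.some.inj this) hy
    by_cases c3 : m * q + (Pal l d n).length < P.length + 2 * w.length
    · have := hper (m * q + (Pal l d n).length - w.length) (by omega) (by omega)
      rw [hf2, Nat.sub_add_cancel (by omega), hf1] at this
      exact absurd (Option.some.inj this).symm hy
    · have h5 : pw s m ++ Pal l d n <+: W := by
        rw [← hZ, hyv]
        exact (List.prefix_append_right_inj _).2 ((List.prefix_append _ _).trans hPalm)
      have h6 : P ++ (w ++ w) <+: pw s m ++ Pal l d n :=
        List.prefix_of_prefix_length_le ⟨Q, by simp [hW]⟩ h5 (by simp [hsm]; omega)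
      exact (List.IsInfix.trans ⟨P, [], by simp⟩ h6.isInfix).trans (hsuf m h2).isInfix

/-! ### Windows of a periodic sequence -/

/-- The window of length `p` starting at position `j` in the sequence `g`. -/
def win (g : ℕ → α) (p j : ℕ) : List α := (List.range p).map (fun i => g (i + j))

theorem win_length (g : ℕ → α) (p j : ℕ) : (win g p j).length = p := by simp [win]

theorem win_getElem? (g : ℕ → α) (p j i : ℕ) (h : i < p) : (win g p j)[i]? = some (g (i + j)) := by
  simp [win, h]

theorem win_append (g : ℕ → α) (p p' j : ℕ) :
    win g (p + p') j = win g p j ++ win g p' (p + j) := by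
  simp only [win, List.range_add, List.map_append, List.map_map]
  congr 1
  apply List.map_congr_left
  intro i _
  simp only [Function.comp]
  congr 1
  omega

theorem win_congr {g g' : ℕ → α} {p j j' : ℕ} (h : ∀ i, g (i + j) = g' (i + j')) :
    win g p j = win g' p j' := by simp [win, h]

theorem factor_win_iff (g : ℕ → α) (M : ℕ) (u : List α) :
    u <:+: win g M 0 ↔ ∃ j, j + u.length ≤ M ∧ u = win g u.length j := by
  constructor
  · rintro ⟨P, Q, h⟩
    have hl := congrArg List.length h
    simp only [List.length_append, win_length] at hl
    refine ⟨P.length, by omega, ?_⟩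
    have h2 : M = P.length + (u.length + Q.length) := by omega
    rw [h2, win_append, win_append, List.append_assoc] at h
    obtain ⟨_, h3⟩ := List.append_inj h (by simp [win_length])
    exact (List.append_inj h3 (by simp [win_length])).1
  · rintro ⟨j, hj, hu⟩
    obtain ⟨e, he⟩ := Nat.exists_eq_add_of_le hj
    refine ⟨win g j 0, win g e (u.length + j), ?_⟩
    rw [he, Nat.add_assoc, win_append, win_append, List.append_assoc, Nat.add_zero, ← hu]

theorem mul_periodic {g : ℕ → α} {q : ℕ} (hg : ∀ i, g (i + q) = g i) (m i : ℕ) :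
    g (i + m * q) = g i := by
  induction m with
  | zero => simp
  | succ m ih => rw [Nat.succ_mul, ← Nat.add_assoc, hg, ih]

theorem pw_eq_win {g : ℕ → α} {q : ℕ} (hg : ∀ i, g (i + q) = g i) {s : List α}
    (hs : s = win g q 0) (m : ℕ) : pw s m = win g (m * q) 0 := by
  induction m with
  | zero => simp [pw, win]
  | succ m ih =>
    rw [pw, ih, Nat.succ_mul, Nat.add_comm, win_append, ← hs]
    congr 1
    exact win_congr fun i => by simp [hg]

/-- The `j`-th conjugate of `s^r` is the window at `j` of the periodic sequence with period
`s`. -/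
theorem conj_eq_win {g : ℕ → α} {q : ℕ} (hg : ∀ i, g (i + q) = g i) {s : List α}
    (hs : s = win g q 0) (r j : ℕ) (hj : j ≤ r * q) :
    (pw s r).drop j ++ (pw s r).take j = win g (r * q) j := by
  obtain ⟨e, he⟩ := Nat.exists_eq_add_of_le hj
  rw [pw_eq_win hg hs, he, win_append, List.drop_left' (win_length _ _ _),
    List.take_left' (win_length _ _ _), Nat.add_comm j e, win_append]
  congr 1
  exact win_congr fun i => by rw [Nat.add_comm e j, ← he, Nat.add_zero, mul_periodic hg]

theorem sum_periodic {h : ℕ → ℤ} {c : ℕ} (hc : ∀ i, h (i + c) = h i) (m : ℕ) :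
    ∑ i ∈ Finset.range (m * c), h i = m * ∑ i ∈ Finset.range c, h i := by
  induction m with
  | zero => simp
  | succ m ih =>
    have : ∑ i ∈ Finset.range c, h (m * c + i) = ∑ i ∈ Finset.range c, h i :=
      Finset.sum_congr rfl fun i _ => by rw [Nat.add_comm, mul_periodic hc]
    rw [Nat.succ_mul, Finset.sum_range_add, ih, this]
    push_cast; ring

theorem sum_map_range (h : ℕ → ℤ) (q : ℕ) :
    ((List.range q).map h).sum = ∑ i ∈ Finset.range q, h i := by
  induction q with
  | zero => simp
  | succ q ih => simp [List.range_succ, Finset.sum_range_succ, ih]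

/-- If one period of `g` has total weight `1` for some integer letter weights, then `q` is the
least period of `g`, so its windows at distinct positions below `q` differ: if `δ` were a smaller
period, the weight of `q * δ` letters would be both `δ` and a multiple of `q`. -/
theorem win_inj {g : ℕ → α} {q p : ℕ} (hg : ∀ i, g (i + q) = g i) (hp : q ≤ p) (f : α → ℤ)
    (hf : ∑ i ∈ Finset.range q, f (g i) = 1) {i j : ℕ} (hij : i < j) (hj : j < q) :
    win g p i ≠ win g p j := by
  intro h
  have h1 : ∀ t, t < q → g (t + i) = g (t + j) := by
    intro t ht
    have := congrArg (fun u => u[t]?) h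
    simp only [win_getElem? g p _ t (by omega)] at this
    exact Option.some.inj this
  have h2 : ∀ t, g (t + i) = g (t + j) := by
    intro t
    have hq : 0 < q := by omega
    have e : t = t % q + t / q * q := by rw [Nat.mul_comm]; exact (Nat.mod_add_div t q).symm
    have e1 : t + i = (t % q + i) + t / q * q := by omega
    have e2 : t + j = (t % q + j) + t / q * q := by omega
    rw [e1, e2, mul_periodic hg, mul_periodic hg]
    exact h1 _ (Nat.mod_lt _ hq)
  obtain ⟨δ, rfl⟩ := Nat.exists_eq_add_of_le hij.le
  have h3 : ∀ t, g (t + δ) = g t := by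
    intro t
    have e : i ≤ i * q := Nat.le_mul_of_pos_right i (by omega)
    have := h2 (t + (i * q - i))
    have e1 : t + (i * q - i) + i = t + i * q := by omega
    have e2 : t + (i * q - i) + (i + δ) = (t + δ) + i * q := by omega
    rw [e1, e2, mul_periodic hg, mul_periodic hg] at this
    exact this.symm
  have s1 := sum_periodic (h := fun t => f (g t)) (c := q) (fun t => by simp only [hg]) δ
  have s2 := sum_periodic (h := fun t => f (g t)) (c := δ) (fun t => by simp only [h3]) q
  rw [hf, Nat.mul_comm, s2] at s1
  have : (q : ℤ) ∣ δ := ⟨_, by rw [s1, mul_one]⟩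
  have := Nat.le_of_dvd (by omega) (Int.natCast_dvd_natCast.1 this)
  omega

theorem ncard_win {g : ℕ → α} {q p : ℕ} (hg : ∀ i, g (i + q) = g i) (hp : q ≤ p) (f : α → ℤ)
    (hf : ∑ i ∈ Finset.range q, f (g i) = 1) (K : ℕ) (hK : K ≤ q) :
    Set.ncard {w | ∃ j, j < K ∧ w = win g p j} = K := by
  have : {w | ∃ j, j < K ∧ w = win g p j} = Set.image (win g p) (Finset.range K : Set ℕ) := by
    ext w; simp [eq_comm]
  rw [this, Set.InjOn.ncard_image, Set.ncard_coe_finset, Finset.card_range]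
  intro i hi j hj hij
  simp only [Finset.coe_range, Set.mem_Iio] at hi hj
  rcases lt_trichotomy i j with h | h | h
  · exact absurd hij (win_inj hg hp f hf h (by omega))
  · exact h
  · exact absurd hij.symm (win_inj hg hp f hf h (by omega))

/-! ### Occurrence of the run in `𝐬` -/

theorem s_prefix_succ (l : ℕ → α) (d : ℕ → ℕ) (hd : ∀ i, 1 ≤ i → 1 ≤ d i) (n : ℕ) (c : α) :
    B l d n (l n) <+: B l d (n + 1) c := by
  by_cases h : c = l n
  · rw [h, B_self]
  · rw [B_ne l d n h]
    obtain ⟨e, he⟩ : ∃ e, d (n + 1) = e + 1 := ⟨d (n + 1) - 1, by have := hd (n + 1); omega⟩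
    simp [he, pw]

theorem s_isPrefix (l : ℕ → α) (d : ℕ → ℕ) (hd : ∀ i, 1 ≤ i → 1 ≤ d i) {n m : ℕ} (h : n ≤ m) :
    B l d n (l n) <+: B l d m (l m) := by
  induction m, h using Nat.le_induction with
  | base => simp
  | succ m _ ih => exact ih.trans (s_prefix_succ l d hd m _)

theorem s_length_ge (l : ℕ → α) (d : ℕ → ℕ) (hd : ∀ i, 1 ≤ i → 1 ≤ d i)
    (hl : ∀ n, l (n + 1) ≠ l n) (n : ℕ) : n + 1 ≤ (B l d n (l n)).length := by
  induction n with
  | zero => simp [B]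
  | succ n ih =>
    rw [B_ne l d n (hl n), List.length_append, pw_length]
    have := Nat.mul_le_mul_right (B l d n (l n)).length (hd (n + 1) (by omega))
    have := B_length_pos l d n (l (n + 1))
    omega

/-- The run `s_n^{d_{n+1}+1} Pal_n` occurs in `𝐬`: the block `s_n` ends `s_{n+jk}`, which is
followed in `𝐬` by a word having the prefix `Pal_{n+1} = s_n^{d_{n+1}} Pal_n`. -/
theorem run_occurs (l : ℕ → α) (d : ℕ → ℕ) (hd : ∀ i, 1 ≤ i → 1 ≤ d i)
    (hl : ∀ n, l (n + 1) ≠ l n) (k : ℕ) (hk : 2 ≤ k) (hper : ∀ n, l (n + k) = l n) (n : ℕ) :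
    ∃ N, pw (B l d n (l n)) (d (n + 1) + 1) ++ Pal l d n <:+: B l d N (l N) := by
  set J := (Pal l d (n + 1)).length + 1 with hJ
  obtain ⟨M, hM⟩ : ∃ M, n + J * k = M + 1 := ⟨n + J * k - 1, by
    have := Nat.mul_le_mul_left J hk; omega⟩
  have hMn : n + 1 ≤ M ∧ J ≤ M + 1 := by
    have := Nat.mul_le_mul_left J hk; omega
  have hlM : l (M + 1) = l n := by rw [← hM]; exact mul_periodic hper J n
  have h1 : Pal l d (n + 1) <+: B l d M (l M) := by
    obtain ⟨i, hi⟩ := Nat.exists_eq_add_of_le hMn.1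
    obtain ⟨T, hT⟩ := exists_desubst l d (n + 1) i (l M)
    rw [← hi] at hT
    have h2 := Pal_isPrefix l d (n + 1) T
    rw [← hT] at h2
    refine List.prefix_of_prefix_length_le h2 (List.prefix_append _ _) ?_
    have := s_length_ge l d hd hl M
    omega
  have h2 : B l d n (l n) <:+ B l d (M + 1) (l (M + 1)) := by
    rw [hlM, ← hM]; exact B_suffix l d n _ _
  refine ⟨M + 2, ?_⟩
  obtain ⟨e, he⟩ : ∃ e, d (M + 2) = e + 1 := ⟨d (M + 2) - 1, by have := hd (M + 2); omega⟩
  obtain ⟨t, ht⟩ := h1.trans (s_prefix_succ l d hd M (l (M + 2)))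
  obtain ⟨u, hu⟩ := h2
  rw [B_ne l d (M + 1) (hl (M + 1)), he, pw_add _ e 1]
  refine ⟨pw (B l d (M + 1) (l (M + 1))) e ++ u, t, ?_⟩
  have e1 : pw (B l d n (l n)) (d (n + 1) + 1) ++ Pal l d n
      = B l d n (l n) ++ Pal l d (n + 1) := by simp [pw, Pal]
  have e2 : pw (B l d (M + 1) (l (M + 1))) 1 = u ++ B l d n (l n) := by simp [pw, hu]
  rw [e1, e2, ← ht]
  simp

/-- If `m` is the last index below `n = m + 1 + i` at which the letter `ℓ m` occurs, then
`Pal_n = μ_n(ℓ m) s_m^{d_{m+1}-1} Pal_m`; for `m = n - k` this reads `Pal_n = s_n D_{n-k}`. -/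
theorem Pal_eq (l : ℕ → α) (d : ℕ → ℕ) (hd : ∀ i, 1 ≤ i → 1 ≤ d i) (m i : ℕ)
    (hb : ∀ j, m < j → j < m + 1 + i → l m ≠ l j) :
    Pal l d (m + 1 + i) = B l d (m + 1 + i) (l m) ++
      (pw (B l d m (l m)) (d (m + 1) - 1) ++ Pal l d m) := by
  induction i with
  | zero =>
    obtain ⟨e, he⟩ : ∃ e, d (m + 1) = e + 1 := ⟨d (m + 1) - 1, by have := hd (m + 1); omega⟩
    simp [Pal, he, pw, B_self]
  | succ i ih =>
    have := B_ne l d (m + 1 + i) (b := l m) (hb _ (by omega) (by omega))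
    rw [← Nat.add_assoc, this, Pal, ih fun j h1 h2 => hb j h1 (by omega)]
    simp

/-- The squares `ww` of `𝐬` with `|w| = r|s_n|` are the square factors of the single run
`s_n^{d_{n+1}+1} Pal_n`. -/
theorem square_iff (l : ℕ → α) (d : ℕ → ℕ) (hd : ∀ i, 1 ≤ i → 1 ≤ d i)
    (hl : ∀ n, l (n + 1) ≠ l n) (k : ℕ) (hk : 2 ≤ k) (hper : ∀ n, l (n + k) = l n) (n r : ℕ)
    (hr1 : 1 ≤ r) (hrd : r ≤ d (n + 1)) (w : List α)
    (hw : w.length = r * (B l d n (l n)).length) :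
    (∃ N, w ++ w <:+: B l d N (l N)) ↔
      w ++ w <:+: pw (B l d n (l n)) (d (n + 1) + 1) ++ Pal l d n := by
  constructor
  · rintro ⟨N, hN⟩
    have h1 := hN.trans (s_isPrefix l d hd (show N ≤ n + 2 + N by omega)).isInfix
    obtain ⟨T, hT⟩ := exists_desubst l d (n + 2) N (l (n + 2 + N))
    rw [hT, flatMap_lift l d (n + 1), flatMap_lift l d n] at h1
    obtain ⟨P, Q, hPQ⟩ := h1
    obtain ⟨v, hv, hv'⟩ := good_lift l d n (hl n) (hd _ (by omega)) T
    have hg : Good (l n) (d (n + 1)) (List.replicate (d (n + 1)) (l n) ++ v) := by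
      rcases hv' with rfl | ⟨y, v', hy, hg, rfl⟩
      · simpa using Good.base (x := l n) (d (n + 1)) le_rfl (Nat.le_succ _)
      · exact Good.step _ _ _ le_rfl (Nat.le_succ _) hy hg
    refine square_in_run l d n r hr1 hrd hg w hw P
      (Q ++ ((List.replicate (d (n + 1)) (l n)).flatMap (B l d n) ++ Pal l d n)) ?_
    rw [← hv, List.flatMap_append, ← hPQ]
    simp
  · intro h
    obtain ⟨N, hN⟩ := run_occurs l d hd hl k hk hper n
    exact ⟨N, h.trans hN⟩

/-! ### The words `s_n` and `D_n` as blocks -/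

/-- Letters whose indices differ by less than `k` are distinct. -/
theorem letter_ne {k : ℕ} (hk : 2 ≤ k) {a : ℕ → α}
    (ha : ∀ i j, 1 ≤ i → i ≤ k → 1 ≤ j → j ≤ k → a i = a j → i = j) (m n : ℕ) (h1 : m < n)
    (h2 : n < m + k) : a (n % k + 1) ≠ a (m % k + 1) := by
  intro h
  have hn := Nat.mod_lt n (show 0 < k by omega)
  have hm := Nat.mod_lt m (show 0 < k by omega)
  have h3 := ha _ _ (by omega) (by omega) (by omega) (by omega) h
  have h4 : n ≡ m [MOD k] := by unfold Nat.ModEq; omega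
  have := (Nat.modEq_iff_dvd' h1.le).1 h4.symm
  have := Nat.le_of_dvd (by omega) this
  omega

theorem s_eq_B {k : ℕ} (hk : 2 ≤ k) {a : ℕ → α}
    (ha : ∀ i j, 1 ≤ i → i ≤ k → 1 ≤ j → j ≤ k → a i = a j → i = j) {d : ℕ → ℕ}
    (hd0 : d 0 = 0) (n : ℕ) :
    s k a d n = B (fun m => a (m % k + 1)) d n (a (n % k + 1)) := by
  induction n using Nat.strong_induction_on with
  | _ n ih =>
  set l : ℕ → α := fun m => a (m % k + 1) with hl
  have hmax : max k 1 = k := by omega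
  rcases Nat.eq_zero_or_pos n with rfl | hn
  · rw [s, S]
    have : (0 + (k - 1) + 1) % k = 0 := by
      rw [show 0 + (k - 1) + 1 = k by omega, Nat.mod_self]
    rw [dif_pos (by omega), this]
    simp [B]
  have key : ∀ i, i ≤ k - 1 → B l d n (l n) = ((List.range i).map
      (fun j => pw (S k a d (n + (k - 1) - 1 - j)) (d (n + (k - 1) + 1 - k - j)))).flatten ++
        B l d (n - i) (l n) := by
    intro i hi
    induction i with
    | zero => simp
    | succ i ihi =>
      rw [ihi (by omega), List.range_succ]
      simp only [List.map_append, List.map_cons, List.map_nil, List.flatten_append,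
        List.flatten_cons, List.flatten_nil, List.append_nil, List.append_assoc]
      congr 1
      rcases Nat.eq_zero_or_pos (n - i) with h0 | hpos
      · rw [show n + (k - 1) + 1 - k - i = 0 by omega, hd0, h0, show n - (i + 1) = 0 by omega]
        simp [pw]
      · obtain ⟨m, hm⟩ : ∃ m, n - i = m + 1 := ⟨n - i - 1, by omega⟩
        rw [show n + (k - 1) + 1 - k - i = m + 1 by omega, hm, show n - (i + 1) = m by omega,
          B_ne l d m (letter_ne hk ha m n (by omega) (by omega)),
          show n + (k - 1) - 1 - i = m + (k - 1) by omega]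
        have := ih m (by omega)
        rw [s] at this
        rw [this]
  rw [s, S, dif_neg (by omega), hmax]
  change _ = B l d n (l n)
  rw [key (k - 1) le_rfl]
  congr 1
  by_cases hnk : k ≤ n
  · obtain ⟨m, rfl⟩ := Nat.exists_eq_add_of_le' hnk
    have h1 : l (m + k) = l m := by simp [hl]
    rw [show m + k - (k - 1) = m + 1 by omega, h1, B_self]
    rw [show m + k + (k - 1) - k = m + (k - 1) by omega]
    exact ih m (by omega)
  · rw [show n - (k - 1) = 0 by omega, S, dif_pos (by omega),
      show n + (k - 1) - k + 1 = n by omega]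
    simp [B, hl]

theorem D_eq {k : ℕ} (hk : 2 ≤ k) {a : ℕ → α}
    (ha : ∀ i j, 1 ≤ i → i ≤ k → 1 ≤ j → j ≤ k → a i = a j → i = j) {d : ℕ → ℕ}
    (hd0 : d 0 = 0) (n : ℕ) :
    D k a d n = pw (s k a d n) (d (n + 1) - 1) ++ Pal (fun m => a (m % k + 1)) d n := by
  rw [D]
  congr 1
  induction n with
  | zero => simp [Pal]
  | succ n ih =>
    rw [Pal, ← ih, List.range_succ_eq_map, List.map_cons, List.flatten_cons, List.map_map,
      ← s_eq_B hk ha hd0]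
    congr 3
    funext j
    simp only [Function.comp]
    congr 2 <;> omega

/-! ### Counting the squares -/

theorem stmt17 {α : Type*} (k : ℕ) (hk : 2 ≤ k) (a : ℕ → α)
    (ha : ∀ i j, 1 ≤ i → i ≤ k → 1 ≤ j → j ≤ k → a i = a j → i = j)
    (d : ℕ → ℕ) (hd0 : d 0 = 0) (hd : ∀ i, 1 ≤ i → 1 ≤ d i) (n r : ℕ) (hn : k ≤ n) (hr1 : 1 ≤ r) (hrd : r ≤ d (n + 1)) :
    (2 * r < d (n + 1) + 2 →
      {w : List α | w.length = r * (s k a d n).length ∧ FactorS k a d (w ++ w)} =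
        {w : List α | ∃ j, j < (s k a d n).length ∧
            w = (pw (s k a d n) r).drop j ++ (pw (s k a d n) r).take j} ∧
      Set.ncard {w : List α | w.length = r * (s k a d n).length ∧
          FactorS k a d (w ++ w)} = (s k a d n).length) ∧
    (2 * r = d (n + 1) + 2 →
      {w : List α | w.length = r * (s k a d n).length ∧ FactorS k a d (w ++ w)} =
        {w : List α | ∃ j, j ≤ (D k a d (n - k)).length ∧
            w = (pw (s k a d n) r).drop j ++ (pw (s k a d n) r).take j} ∧
      Set.ncard {w : List α | w.length = r * (s k a d n).length ∧
          FactorS k a d (w ++ w)} = (D k a d (n - k)).length + 1) ∧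
    (d (n + 1) + 2 < 2 * r →
      {w : List α | w.length = r * (s k a d n).length ∧ FactorS k a d (w ++ w)} = ∅) := by
  set l : ℕ → α := fun m => a (m % k + 1) with hl_def
  have hl : ∀ n, l (n + 1) ≠ l n := fun n => letter_ne hk ha n (n + 1) (by omega) (by omega)
  have hper : ∀ n, l (n + k) = l n := fun n => by simp [hl_def]
  set t := s k a d n with ht
  set q := t.length with hq
  set E := D k a d (n - k) with hE
  have hsB : ∀ m, s k a d m = B l d m (l m) := fun m => s_eq_B hk ha hd0 m
  have htB : t = B l d n (l n) := hsB n
  have hq0 : 0 < q := by rw [hq, htB]; exact B_length_pos _ _ _ _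
  obtain ⟨m, hm⟩ : ∃ m, n = m + k := ⟨n - k, by omega⟩
  have hEB : E = pw (B l d m (l m)) (d (m + 1) - 1) ++ Pal l d m := by
    rw [hE, show n - k = m by omega, D_eq hk ha hd0, hsB]
  have hPal : Pal l d n = t ++ E := by
    have := Pal_eq l d hd m (k - 1) fun j h1 h2 =>
      (letter_ne hk ha m j h1 (by omega)).symm
    rw [show m + 1 + (k - 1) = n by omega, ← hper m, ← hm, ← htB, hm, hper m, ← hEB, ← hm] at this
    exact this
  have hElt : E.length < q := by
    have h1 : (B l d (m + 1) (l (m + 1))).length ≤ q := by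
      rw [hq, htB]; exact (s_isPrefix l d hd (by omega)).length_le
    have h2 := Pal_length_lt l d m (hl m)
    have h3 : d (m + 1) * (B l d m (l m)).length
        = (d (m + 1) - 1) * (B l d m (l m)).length + (B l d m (l m)).length := by
      rw [← Nat.succ_mul]; congr 1; have := hd (m + 1); omega
    rw [B_ne l d m (hl m), List.length_append, pw_length] at h1
    rw [hEB, List.length_append, pw_length]
    omega
  -- the periodic sequence `s_n^ω`
  obtain ⟨g, hg, htg⟩ : ∃ g : ℕ → α, (∀ i, g (i + q) = g i) ∧ t = win g q 0 := by
    refine ⟨fun i => t.getD (i % q) (a 0), fun i => by simp, ?_⟩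
    apply List.ext_getElem (by simp [win_length, hq])
    intro i h1 h2
    have h3 : i % q = i := Nat.mod_eq_of_lt h1
    simp [win, h3, h1]
  have hEg : E = win g E.length 0 := by
    have h1 : E <+: t ++ E := by
      have h2 := Pal_isPrefix l d n [l n]
      rw [hPal, List.flatMap_cons, List.flatMap_nil, List.append_nil, ← htB] at h2
      exact (List.prefix_append_right_inj _).1 h2
    have h2 : E <+: t := List.prefix_of_prefix_length_le h1 (List.prefix_append _ _) hElt.le
    obtain ⟨u, hu⟩ := h2
    have h3 : q = E.length + u.length := by rw [hq, ← hu]; simp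
    rw [htg, h3, win_append] at hu
    exact (List.append_inj hu (by simp [win_length])).1
  set M := (d (n + 1) + 2) * q + E.length with hM
  have hrun : pw (B l d n (l n)) (d (n + 1) + 1) ++ Pal l d n = win g M 0 := by
    rw [hPal, ← htB, ← List.append_assoc, hM, win_append, ← pw_eq_win hg htg]
    rw [pw_add t (d (n + 1) + 1) 1]
    congr 1
    · simp [pw]
    · rw [hEg]
      simp only [win_length]
      exact win_congr fun i => by rw [Nat.add_zero, Nat.add_zero, mul_periodic hg]
  -- letter weights of total weight `1` on `s_n`
  obtain ⟨f, hf⟩ : ∃ f : α → ℤ, ∑ i ∈ Finset.range q, f (g i) = 1 := by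
    obtain ⟨f, hf⟩ := exists_weight l d n (fun _ => 1)
    refine ⟨f, ?_⟩
    have := hf (l n)
    rw [← htB, htg, win, List.map_map, sum_map_range] at this
    exact this
  have hqp : q ≤ r * q := Nat.le_mul_of_pos_left q hr1
  have hmain : ∀ w : List α, (w.length = r * q ∧ FactorS k a d (w ++ w)) ↔
      ∃ j, j + 2 * (r * q) ≤ M ∧ w = win g (r * q) j := by
    intro w
    have hfac : FactorS k a d (w ++ w) ↔ ∃ N, w ++ w <:+: B l d N (l N) := by
      simp only [FactorS, hsB]
    rw [hfac]
    have hshift : ∀ j, win g (r * q) (r * q + j) = win g (r * q) j := fun j =>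
      win_congr fun i => by
        rw [Nat.add_comm (r * q), ← Nat.add_assoc, mul_periodic hg]
    constructor
    · rintro ⟨hw, h⟩
      rw [square_iff l d hd hl k hk hper n r hr1 hrd w (by rw [hw, hq, htB]), hrun,
        factor_win_iff] at h
      obtain ⟨j, hj, h⟩ := h
      rw [List.length_append, hw, win_append] at h
      rw [List.length_append, hw] at hj
      exact ⟨j, by omega, (List.append_inj h (by simp [win_length, hw])).1⟩
    · rintro ⟨j, hj, rfl⟩
      refine ⟨win_length _ _ _, ?_⟩
      rw [square_iff l d hd hl k hk hper n r hr1 hrd _ (by rw [win_length, hq, htB]), hrun,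
        factor_win_iff]
      refine ⟨j, by simp only [List.length_append, win_length]; omega, ?_⟩
      rw [List.length_append, win_length, win_append, hshift]
  have hconj : ∀ K, K ≤ q → {w : List α | ∃ j, j < K ∧
      w = (pw t r).drop j ++ (pw t r).take j} = {w | ∃ j, j < K ∧ w = win g (r * q) j} := by
    intro K hK
    ext w
    refine exists_congr fun j => and_congr_right fun hj => ?_
    rw [conj_eq_win hg htg r j (by omega)]
  have hmod : ∀ j, win g (r * q) j = win g (r * q) (j % q) := fun j =>
    win_congr fun i => by
      have e : i + j = i + j % q + j / q * q := by
        have := Nat.mod_add_div j q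
        rw [Nat.mul_comm] at this
        omega
      rw [e, mul_periodic hg]
  refine ⟨fun h => ?_, fun h => ?_, fun h => ?_⟩
  · have hset : {w : List α | w.length = r * q ∧ FactorS k a d (w ++ w)} =
        {w | ∃ j, j < q ∧ w = win g (r * q) j} := by
      ext w
      rw [Set.mem_ofPred_eq, hmain]
      constructor
      · rintro ⟨j, -, rfl⟩
        exact ⟨j % q, Nat.mod_lt _ hq0, hmod j⟩
      · rintro ⟨j, hj, rfl⟩
        refine ⟨j, ?_, rfl⟩
        have h1 : (2 * r + 1) * q ≤ (d (n + 1) + 2) * q := Nat.mul_le_mul_right q h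
        have h2 : (2 * r + 1) * q = 2 * (r * q) + q := by ring
        omega
    rw [hset, hconj q le_rfl]
    exact ⟨rfl, ncard_win hg hqp f hf q le_rfl⟩
  · have hset : {w : List α | w.length = r * q ∧ FactorS k a d (w ++ w)} =
        {w | ∃ j, j < E.length + 1 ∧ w = win g (r * q) j} := by
      ext w
      rw [Set.mem_ofPred_eq, hmain]
      refine exists_congr fun j => and_congr_left fun _ => ?_
      have h2 : (d (n + 1) + 2) * q = 2 * (r * q) := by rw [← h]; ring
      omega
    simp only [← Nat.lt_succ_iff (n := E.length), Nat.succ_eq_add_one]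
    rw [hset, hconj _ hElt]
    exact ⟨rfl, ncard_win hg hqp f hf _ hElt⟩
  · rw [Set.eq_empty_iff_forall_notMem]
    intro w hw
    rw [Set.mem_ofPred_eq, hmain] at hw
    obtain ⟨j, hj, -⟩ := hw
    have h1 : (d (n + 1) + 3) * q ≤ 2 * r * q := Nat.mul_le_mul_right q h
    have h2 : (d (n + 1) + 3) * q = (d (n + 1) + 2) * q + q := by ring
    have h3 : 2 * r * q = 2 * (r * q) := by ring
    omega

end Epi
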